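/- Let F be a Ferrers diagram of semiperimeter n+1. The map ψ sending a recurrent configuration x ∈ Rec(G(F)) to the pair (φ_CT(minrec(x)), x − minrec(x)) is a bijection from Rec(G(F)) onto the set of pairs (T, (a_1,…,a_n)) with T ∈ EWtab(F) and 0 ≤ a_j < ν_j(T) for every j ∈ {1,…,n}. -/

import Mathlib

open Classical

/-- A Ferrers diagram of semiperimeter `n + 1`, encoded by the set of its row labels
(labels `0, …, n` run along the south-east border; `0` labels the top row and the
last label `n` is a column label). -/
structure Ferrers (n : ℕ) where
  rows : Finset (Fin (n + 1))
  zero_mem : 0 ∈ rows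
  last_not_mem : Fin.last n ∉ rows

namespace Ferrers

/-- `(i, j)` is a cell of the diagram: `i` is a row label, `j` a column label, `i < j`. -/
def Cell {n : ℕ} (F : Ferrers n) (i j : Fin (n + 1)) : Prop :=
  i ∈ F.rows ∧ j ∉ F.rows ∧ i < j

/-- Adjacency in the Ferrers graph `G(F)`. -/
def Adj {n : ℕ} (F : Ferrers n) (u v : Fin (n + 1)) : Prop :=
  F.Cell u v ∨ F.Cell v u

/-- Degree of a vertex in `G(F)`. -/
noncomputable def deg {n : ℕ} (F : Ferrers n) (v : Fin (n + 1)) : ℕ :=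
  {u | F.Adj v u}.ncard

/-- Toppling a single vertex.  The height at the sink `0` is kept equal to `c 0`
(grains sent to the sink vanish); toppling the sink sends one grain to each of
its neighbours. -/
noncomputable def topple {n : ℕ} (F : Ferrers n) (c : Fin (n + 1) → ℕ)
    (v : Fin (n + 1)) : Fin (n + 1) → ℕ :=
  fun u =>
    if u = 0 then c 0
    else if u = v then c v - F.deg v
    else if F.Adj v u then c u + 1
    else c u

/-- Toppling the vertices of a list in order. -/
noncomputable def toppleList {n : ℕ} (F : Ferrers n) (c : Fin (n + 1) → ℕ)
    (l : List (Fin (n + 1))) : Fin (n + 1) → ℕ :=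
  l.foldl F.topple c

/-- Simultaneous toppling of a set of vertices. -/
noncomputable def toppleSet {n : ℕ} (F : Ferrers n) (c : Fin (n + 1) → ℕ)
    (S : Set (Fin (n + 1))) : Fin (n + 1) → ℕ :=
  fun u =>
    if u = 0 then c 0
    else c u + {w ∈ S | F.Adj w u}.ncard - if u ∈ S then F.deg u else 0

/-- A configuration is stable if every non-sink vertex has fewer grains than its degree. -/
def Stable {n : ℕ} (F : Ferrers n) (c : Fin (n + 1) → ℕ) : Prop :=
  ∀ v, v ≠ 0 → c v < F.deg v

/-- A Dhar (burning) ordering for `c`: an ordering `v₀ = 0, v₁, …, vₙ` of all the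
vertices such that each `vᵢ` (`i ≥ 1`) is unstable after toppling `v₀, …, v_{i-1}`. -/
def DharSeq {n : ℕ} (F : Ferrers n) (c : Fin (n + 1) → ℕ) (l : List (Fin (n + 1))) : Prop :=
  l.length = n + 1 ∧ l.Nodup ∧ l.head? = some 0 ∧
    ∀ i, ∀ h : i < l.length, 1 ≤ i →
      F.deg (l.get ⟨i, h⟩) ≤ F.toppleList c (l.take i) (l.get ⟨i, h⟩)

/-- Recurrent configurations (via Dhar's criterion).  The height at the sink is
normalised to `0`. -/
def Recurrent {n : ℕ} (F : Ferrers n) (c : Fin (n + 1) → ℕ) : Prop :=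
  c 0 = 0 ∧ F.Stable c ∧ ∃ l, F.DharSeq c l

/-- Minimal recurrent configurations: recurrent with minimal total number of grains. -/
def RecMin {n : ℕ} (F : Ferrers n) (c : Fin (n + 1) → ℕ) : Prop :=
  F.Recurrent c ∧ ∀ c', F.Recurrent c' → (∑ v, c v) ≤ ∑ v, c' v

/-- Canonical toppling: block `0` is `{0}` (the sink); from then on, blocks with odd
index are the sets of currently unstable column vertices and blocks with even index
the sets of currently unstable row vertices.  The first component is the configuration
just before toppling the block recorded in the second component. -/
noncomputable def canonAux {n : ℕ} (F : Ferrers n) (c : Fin (n + 1) → ℕ) :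
    ℕ → ((Fin (n + 1) → ℕ) × Set (Fin (n + 1)))
  | 0 => (c, {0})
  | k + 1 =>
    let c' := F.toppleSet (canonAux F c k).1 (canonAux F c k).2
    (c', {v | v ≠ 0 ∧ (if k % 2 = 0 then v ∉ F.rows else v ∈ F.rows) ∧ F.deg v ≤ c' v})

/-- The `k`-th block of the canonical toppling of `c`:
`canonTop F c 0 = U⁰ = {0}`, `canonTop F c (2i-1) = Vⁱ`, `canonTop F c (2i) = Uⁱ`. -/
noncomputable def canonTop {n : ℕ} (F : Ferrers n) (c : Fin (n + 1) → ℕ) (k : ℕ) :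
    Set (Fin (n + 1)) :=
  (F.canonAux c k).2

/-- The configuration just before toppling the `k`-th block of the canonical toppling. -/
noncomputable def canonConfig {n : ℕ} (F : Ferrers n) (c : Fin (n + 1) → ℕ) (k : ℕ) :
    Fin (n + 1) → ℕ :=
  (F.canonAux c k).1

/-- The index of the block of the canonical toppling of `c` containing `v`. -/
noncomputable def bIdx {n : ℕ} (F : Ferrers n) (c : Fin (n + 1) → ℕ) (v : Fin (n + 1)) : ℕ :=
  sInf {k | v ∈ F.canonTop c k}

/-- `T` is a EW-tableau on `F` (entries of non-cells are normalised to `false`):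
the top row contains only `1`s, every other row contains a `0`, and there is no
rectangle with two diagonally opposite `0`s and two `1`s in the other corners. -/
def IsEW {n : ℕ} (F : Ferrers n) (T : Fin (n + 1) → Fin (n + 1) → Bool) : Prop :=
  (∀ i j, ¬F.Cell i j → T i j = false) ∧
  (∀ j, F.Cell 0 j → T 0 j = true) ∧
  (∀ i, i ∈ F.rows → i ≠ 0 → ∃ j, F.Cell i j ∧ T i j = false) ∧
  (∀ i i' j j', F.Cell i j → F.Cell i j' → F.Cell i' j → F.Cell i' j' →
    T i j = T i' j' → T i j' = T i' j → T i j = T i j')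

/-- The configuration associated to a tableau: row vertices count the `1`s in their
row, column vertices count the `0`s in their column (the sink is normalised to `0`). -/
noncomputable def phiTC {n : ℕ} (F : Ferrers n) (T : Fin (n + 1) → Fin (n + 1) → Bool) :
    Fin (n + 1) → ℕ :=
  fun v =>
    if v = 0 then 0
    else if v ∈ F.rows then {j | F.Cell v j ∧ T v j = true}.ncard
    else {i | F.Cell i v ∧ T i v = false}.ncard

/-- The tableau associated to a (minimal recurrent) configuration: a cell `(i, j)`
gets a `1` exactly when `i` lies in an earlier block than `j` in the canonical
toppling of `c`. -/
noncomputable def phiCT {n : ℕ} (F : Ferrers n) (c : Fin (n + 1) → ℕ) :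
    Fin (n + 1) → Fin (n + 1) → Bool :=
  fun i j => if F.Cell i j ∧ F.bIdx c i < F.bIdx c j then true else false

/-- The supplementary tableau of `T`: `S i j = 1` exactly when the row vertex `i`
lies in an earlier block than the column vertex `j` in `CanonTop (φ_TC T)`. -/
noncomputable def suppS {n : ℕ} (F : Ferrers n) (T : Fin (n + 1) → Fin (n + 1) → Bool)
    (i j : Fin (n + 1)) : Bool :=
  if F.bIdx (F.phiTC T) i < F.bIdx (F.phiTC T) j then true else false

/-- The entry of `T` in cell `(j, k)` is a cornersupport entry. -/
def Cornersupport {n : ℕ} (F : Ferrers n) (T : Fin (n + 1) → Fin (n + 1) → Bool)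
    (j k : Fin (n + 1)) : Prop :=
  ∃ j' k', j' ∈ F.rows ∧ k' ∉ F.rows ∧ j' ≠ j ∧ k' ≠ k ∧
    F.suppS T j' k' = !(T j k) ∧ F.suppS T j' k = T j k ∧ F.suppS T j k' = T j k

/-- `ν_v(T)`: the number of non-cornersupport `0`s in row `v` (if `v` is a row label),
resp. non-cornersupport `1`s in column `v` (if `v` is a column label). -/
noncomputable def nu {n : ℕ} (F : Ferrers n) (T : Fin (n + 1) → Fin (n + 1) → Bool)
    (v : Fin (n + 1)) : ℕ :=
  if v ∈ F.rows then {k | F.Cell v k ∧ T v k = false ∧ ¬F.Cornersupport T v k}.ncard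
  else {i | F.Cell i v ∧ T i v = true ∧ ¬F.Cornersupport T i v}.ncard

/-- `μ_v(c)`: if `v ∈ Uⁱ`, the number of `k ∈ Vⁱ` with `k > v`; if `v ∈ Vⁱ`,
the number of `k ∈ U^{i-1}` with `k < v`.  In both cases the relevant block is the
one immediately preceding the block of `v`. -/
noncomputable def mu {n : ℕ} (F : Ferrers n) (c : Fin (n + 1) → ℕ) (v : Fin (n + 1)) : ℕ :=
  if v ∈ F.rows then {k | v < k ∧ k ∈ F.canonTop c (F.bIdx c v - 1)}.ncard
  else {k | k < v ∧ k ∈ F.canonTop c (F.bIdx c v - 1)}.ncard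

/-- The minimal recurrent configuration with the same canonical toppling as `c`:
if `j ∈ Uⁱ` then `minrec c j = |{ℓ ∈ Vᵏ : j < ℓ, k > i}|`, and if `j ∈ Vⁱ` then
`minrec c j = |{ℓ ∈ Uᵏ : ℓ < j, k ≥ i}|` (blocks `Vᵏ` sit at odd index `2k - 1`,
blocks `Uᵏ` at even index `2k`). -/
noncomputable def minrecFun {n : ℕ} (F : Ferrers n) (c : Fin (n + 1) → ℕ) :
    Fin (n + 1) → ℕ :=
  fun j =>
    if j = 0 then 0
    else if j ∈ F.rows then
      {l | j < l ∧ ∃ k, F.bIdx c j < 2 * k + 1 ∧ l ∈ F.canonTop c (2 * k + 1)}.ncard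
    else
      {l | l < j ∧ ∃ k, F.bIdx c j < 2 * k ∧ l ∈ F.canonTop c (2 * k)}.ncard

/-- The number of edges of `G(F)` (equivalently, the number of cells of `F`). -/
noncomputable def edgeCount {n : ℕ} (F : Ferrers n) : ℕ :=
  {p : Fin (n + 1) × Fin (n + 1) | F.Cell p.1 p.2}.ncard

end Ferrers

namespace Ferrers

variable {n : ℕ} {F : Ferrers n}

/-- The number of neighbours of `v` satisfying `p`. -/
noncomputable def nbrCount (F : Ferrers n) (v : Fin (n + 1)) (p : Fin (n + 1) → Prop) : ℕ :=
  {w | F.Adj w v ∧ p w}.ncard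

lemma Adj.symm {u v : Fin (n + 1)} (h : F.Adj u v) : F.Adj v u := Or.symm h

lemma adj_comm {u v : Fin (n + 1)} : F.Adj u v ↔ F.Adj v u := or_comm

lemma Adj.mem_rows_iff {u v : Fin (n + 1)} (h : F.Adj u v) : u ∈ F.rows ↔ v ∉ F.rows := by
  rcases h with ⟨h1, h2, _⟩ | ⟨h1, h2, _⟩ <;> tauto

lemma adj_iff_of_mem {v : Fin (n + 1)} (hv : v ∈ F.rows) (w : Fin (n + 1)) :
    F.Adj w v ↔ F.Cell v w := by
  constructor
  · rintro (h | h)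
    · exact absurd hv h.2.1
    · exact h
  · exact Or.inr

lemma adj_iff_of_notMem {v : Fin (n + 1)} (hv : v ∉ F.rows) (w : Fin (n + 1)) :
    F.Adj w v ↔ F.Cell w v := by
  constructor
  · rintro (h | h)
    · exact h
    · exact absurd h.1 hv
  · exact Or.inl

lemma nbrCount_mono {v : Fin (n + 1)} {p q : Fin (n + 1) → Prop}
    (h : ∀ w, F.Adj w v → p w → q w) : F.nbrCount v p ≤ F.nbrCount v q :=
  Set.ncard_le_ncard (fun w hw => ⟨hw.1, h w hw.1 hw.2⟩) (Set.toFinite _)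

lemma nbrCount_congr {v : Fin (n + 1)} {p q : Fin (n + 1) → Prop}
    (h : ∀ w, F.Adj w v → (p w ↔ q w)) : F.nbrCount v p = F.nbrCount v q :=
  le_antisymm (nbrCount_mono fun w hw => (h w hw).1) (nbrCount_mono fun w hw => (h w hw).2)

lemma nbrCount_add {v : Fin (n + 1)} {p q r : Fin (n + 1) → Prop}
    (hd : ∀ w, F.Adj w v → p w → ¬q w) (hr : ∀ w, F.Adj w v → (r w ↔ p w ∨ q w)) :
    F.nbrCount v r = F.nbrCount v p + F.nbrCount v q := by
  unfold nbrCount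
  rw [← Set.ncard_union_eq _ (Set.toFinite _) (Set.toFinite _)]
  · congr 1
    ext w
    have := hr w
    simp only [Set.mem_ofPred_eq, Set.mem_union]
    tauto
  · rw [Set.disjoint_left]
    rintro w ⟨h1, h2⟩ ⟨_, h3⟩
    exact hd w h1 h2 h3

lemma nbrCount_pos {v : Fin (n + 1)} {p : Fin (n + 1) → Prop} :
    0 < F.nbrCount v p ↔ ∃ w, F.Adj w v ∧ p w := by
  unfold nbrCount
  rw [Set.ncard_pos (Set.toFinite _)]
  rfl

lemma deg_eq_nbrCount (v : Fin (n + 1)) : F.deg v = F.nbrCount v fun _ => True := by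
  unfold deg nbrCount
  congr 1
  ext w
  simp [adj_comm]

lemma deg_eq_add {v : Fin (n + 1)} {p q : Fin (n + 1) → Prop}
    (hd : ∀ w, F.Adj w v → (q w ↔ ¬p w)) :
    F.deg v = F.nbrCount v p + F.nbrCount v q := by
  rw [deg_eq_nbrCount]
  refine nbrCount_add (fun w hw h1 h2 => (hd w hw).1 h2 h1) fun w hw => ?_
  have := hd w hw
  tauto

/-- Block indices of a canonical toppling in which every vertex topples exactly once. -/
structure IsLayering (F : Ferrers n) (b : Fin (n + 1) → ℕ) : Prop where
  zero : b 0 = 0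
  parity : ∀ v, v ∈ F.rows ↔ b v % 2 = 0
  pred : ∀ v, v ≠ 0 → ∃ u, F.Adj u v ∧ b u + 1 = b v

/-- The smallest configuration toppling according to `b`. -/
noncomputable def layerMin (F : Ferrers n) (b : Fin (n + 1) → ℕ) (v : Fin (n + 1)) : ℕ :=
  if v = 0 then 0 else F.nbrCount v fun w => b v < b w

/-- The number of neighbours of `v` in the layer preceding that of `v`. -/
noncomputable def layerPred (F : Ferrers n) (b : Fin (n + 1) → ℕ) (v : Fin (n + 1)) : ℕ :=
  F.nbrCount v fun w => b w + 1 = b v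

/-- The heights of `c` lie in the range for which `c` topples according to `b`. -/
structure Fits (F : Ferrers n) (b c : Fin (n + 1) → ℕ) : Prop where
  layering : F.IsLayering b
  zero : c 0 = 0
  lower : ∀ v, v ≠ 0 → F.layerMin b v ≤ c v
  upper : ∀ v, v ≠ 0 → c v < F.layerMin b v + F.layerPred b v

lemma IsLayering.adj_parity {b : Fin (n + 1) → ℕ} (hb : F.IsLayering b) {u v : Fin (n + 1)}
    (h : F.Adj u v) : b u % 2 ≠ b v % 2 := by
  have h1 := h.mem_rows_iff
  rw [hb.parity, hb.parity] at h1
  omega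

lemma IsLayering.layerPred_pos {b : Fin (n + 1) → ℕ} (hb : F.IsLayering b) {v : Fin (n + 1)}
    (hv : v ≠ 0) : 0 < F.layerPred b v :=
  nbrCount_pos.2 (hb.pred v hv)

lemma IsLayering.pos {b : Fin (n + 1) → ℕ} (hb : F.IsLayering b) {v : Fin (n + 1)}
    (hv : v ≠ 0) : 0 < b v := by
  obtain ⟨u, _, h⟩ := hb.pred v hv
  omega

lemma IsLayering.fits_layerMin {b : Fin (n + 1) → ℕ} (hb : F.IsLayering b) :
    F.Fits b (F.layerMin b) where
  layering := hb
  zero := by simp [layerMin]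
  lower _ _ := le_rfl
  upper v hv := by have := hb.layerPred_pos hv; omega

/-- The degree of `v` split into the neighbours before and after `v`. -/
lemma IsLayering.deg_eq {b : Fin (n + 1) → ℕ} (hb : F.IsLayering b) {v : Fin (n + 1)}
    (hv : v ≠ 0) : F.deg v = F.nbrCount v (fun w => b w < b v) + F.layerMin b v := by
  rw [layerMin, if_neg hv]
  refine deg_eq_add fun w hw => ?_
  have := hb.adj_parity hw
  omega

lemma IsLayering.nbrCount_lt_eq {b : Fin (n + 1) → ℕ} (hb : F.IsLayering b) (v : Fin (n + 1)) :
    F.nbrCount v (fun w => b w < b v) =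
      F.nbrCount v (fun w => b w + 2 < b v) + F.layerPred b v := by
  refine nbrCount_add (fun w hw => ?_) fun w hw => ?_ <;> have := hb.adj_parity hw <;> omega

lemma Fits.stable {b c : Fin (n + 1) → ℕ} (h : F.Fits b c) : F.Stable c := by
  intro v hv
  have h1 := h.upper v hv
  have h2 := h.layering.deg_eq hv
  have h3 := h.layering.nbrCount_lt_eq v
  omega

/-- If `c` fits `b`, the blocks of the canonical toppling of `c` are the layers of `b`. -/
lemma Fits.canonAux_eq {b c : Fin (n + 1) → ℕ} (h : F.Fits b c) (k : ℕ) :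
    (∀ u, u ≠ 0 → (F.canonAux c k).1 u =
      c u + F.nbrCount u (fun w => b w < k) - if b u < k then F.deg u else 0) ∧
    (F.canonAux c k).2 = {v | b v = k} := by
  have hb := h.layering
  induction k with
  | zero =>
    refine ⟨fun u _ => ?_, ?_⟩
    · simp [canonAux, nbrCount]
    · ext v
      simp only [canonAux, Set.mem_singleton_iff, Set.mem_ofPred_eq]
      refine ⟨fun hv => hv ▸ hb.zero, fun hv => ?_⟩
      by_contra h0
      have := hb.pos h0
      omega
  | succ k ih =>
    have hconf : ∀ u, u ≠ 0 → (F.canonAux c (k + 1)).1 u =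
        c u + F.nbrCount u (fun w => b w < k + 1) - if b u < k + 1 then F.deg u else 0 := by
      intro u hu
      have hset : {w | b w = k ∧ F.Adj w u}.ncard = F.nbrCount u fun w => b w = k := by
        unfold nbrCount
        congr 1
        ext w
        simp [and_comm]
      have hsum : F.nbrCount u (fun w => b w < k + 1) =
          F.nbrCount u (fun w => b w < k) + F.nbrCount u fun w => b w = k :=
        nbrCount_add (fun w _ => by omega) fun w _ => by omega
      simp only [canonAux, toppleSet, if_neg hu, ih.1 u hu, ih.2, Set.mem_ofPred_eq, hset]
      have hdeg := hb.deg_eq hu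
      have hlow := h.lower u hu
      rcases lt_trichotomy (b u) k with hlt | heq | hgt
      · have hm : F.nbrCount u (fun w => b w < b u) ≤ F.nbrCount u fun w => b w < k :=
          nbrCount_mono fun w _ => by omega
        simp only [if_pos hlt, if_pos (Nat.lt_succ_of_lt hlt), if_neg hlt.ne]
        omega
      · simp only [heq, lt_self_iff_false, if_false, if_true, Nat.lt_succ_self]
        omega
      · simp only [if_neg (show ¬b u < k by omega), if_neg (show ¬b u = k by omega),
          if_neg (show ¬b u < k + 1 by omega)]
        omega
    refine ⟨hconf, ?_⟩
    have hmem : ∀ v, v ∈ (F.canonAux c (k + 1)).2 ↔ v ≠ 0 ∧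
        (if k % 2 = 0 then v ∉ F.rows else v ∈ F.rows) ∧
          F.deg v ≤ (F.canonAux c (k + 1)).1 v := fun v => Iff.rfl
    ext v
    rw [hmem, Set.mem_ofPred_eq]
    by_cases hv : v = 0
    · subst hv
      simp [hb.zero]
    have hpar : (if k % 2 = 0 then v ∉ F.rows else v ∈ F.rows) ↔ b v % 2 = (k + 1) % 2 := by
      rw [hb.parity]
      split_ifs <;> omega
    rw [hpar, hconf v hv]
    have hdeg := hb.deg_eq hv
    have hlow := h.lower v hv
    have hup := h.upper v hv
    have hst := h.stable v hv
    have hsplit := hb.nbrCount_lt_eq v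
    constructor
    · rintro ⟨-, hp, hle⟩
      by_contra hne
      rcases lt_or_gt_of_ne hne with hlt | hgt
      · rw [if_pos hlt] at hle
        have hm : F.nbrCount v (fun w => b w < k + 1) ≤ F.deg v := by
          rw [deg_eq_nbrCount]
          exact nbrCount_mono fun _ _ _ => trivial
        omega
      · rw [if_neg (by omega)] at hle
        have hm : F.nbrCount v (fun w => b w < k + 1) ≤ F.nbrCount v fun w => b w + 2 < b v :=
          nbrCount_mono fun w _ => by omega
        omega
    · intro heq
      refine ⟨hv, by omega, ?_⟩
      rw [if_neg (by omega), ← heq]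
      omega

lemma Fits.canonTop_eq {b c : Fin (n + 1) → ℕ} (h : F.Fits b c) (k : ℕ) :
    F.canonTop c k = {v | b v = k} := (h.canonAux_eq k).2

lemma Fits.bIdx_eq {b c : Fin (n + 1) → ℕ} (h : F.Fits b c) : F.bIdx c = b := by
  funext v
  simp only [bIdx, h.canonTop_eq, Set.mem_ofPred_eq]
  have : {k | b v = k} = {b v} := by
    ext k
    simp [eq_comm]
  rw [this, csInf_singleton]

lemma Fits.minrecFun_eq {b c : Fin (n + 1) → ℕ} (h : F.Fits b c) :
    F.minrecFun c = F.layerMin b := by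
  have hb := h.layering
  funext v
  simp only [minrecFun, layerMin, h.bIdx_eq, h.canonTop_eq, Set.mem_ofPred_eq]
  split_ifs with h0 hr
  · rfl
  · unfold nbrCount
    congr 1
    ext w
    simp only [Set.mem_ofPred_eq, adj_iff_of_mem hr, Cell, hr, true_and, hb.parity w]
    constructor
    · rintro ⟨h1, k, h2, h3⟩
      exact ⟨⟨by omega, h1⟩, by omega⟩
    · rintro ⟨⟨h1, h2⟩, h3⟩
      exact ⟨h2, b w / 2, by omega, by omega⟩
  · unfold nbrCount
    congr 1
    ext w
    simp only [Set.mem_ofPred_eq, adj_iff_of_notMem hr, Cell, hr, not_false_eq_true, true_and,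
      hb.parity w]
    constructor
    · rintro ⟨h1, k, h2, h3⟩
      exact ⟨⟨by omega, h1⟩, by omega⟩
    · rintro ⟨⟨h1, h2⟩, h3⟩
      exact ⟨h2, b w / 2, by omega, by omega⟩

lemma toppleList_apply {c : Fin (n + 1) → ℕ} {l : List (Fin (n + 1))} {v : Fin (n + 1)}
    (hl : l.Nodup) (hv : v ≠ 0) (hvl : v ∉ l) :
    F.toppleList c l v = c v + F.nbrCount v (· ∈ l) := by
  induction l using List.reverseRecOn with
  | nil => simp [toppleList, nbrCount]
  | append_singleton l a ih =>
    rw [List.nodup_append] at hl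
    obtain ⟨hl1, -, hal⟩ := hl
    rw [List.mem_append, not_or, List.mem_singleton] at hvl
    have hal' : a ∉ l := fun h => hal a h a (by simp) rfl
    have hsum : F.nbrCount v (· ∈ l ++ [a]) =
        F.nbrCount v (· ∈ l) + F.nbrCount v (· = a) :=
      nbrCount_add (fun w _ hw ha => hal' (ha ▸ hw)) fun w _ => by simp
    have hone : F.nbrCount v (· = a) = if F.Adj a v then 1 else 0 := by
      unfold nbrCount
      split_ifs with ha
      · have : {w | F.Adj w v ∧ w = a} = {a} := by
          ext w
          simp only [Set.mem_ofPred_eq, Set.mem_singleton_iff]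
          exact ⟨And.right, fun h => ⟨h ▸ ha, h⟩⟩
        rw [this, Set.ncard_singleton]
      · have : {w | F.Adj w v ∧ w = a} = ∅ := by
          ext w
          simp only [Set.mem_ofPred_eq, Set.mem_empty_iff_false, iff_false]
          rintro ⟨h1, rfl⟩
          exact ha h1
        rw [this, Set.ncard_empty]
    have hstep : F.toppleList c (l ++ [a]) v = F.topple (F.toppleList c l) a v := by
      simp [toppleList]
    rw [hstep, hsum, hone, topple, if_neg hv, if_neg hvl.2, ih hl1 hvl.1]
    split_ifs <;> omega

/-- Every configuration fitting a layering is recurrent. -/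
lemma Fits.recurrent {b c : Fin (n + 1) → ℕ} (h : F.Fits b c) : F.Recurrent c := by
  have hb := h.layering
  refine ⟨h.zero, h.stable, ?_⟩
  let r : Fin (n + 1) → Fin (n + 1) → Prop := fun u v => b u ≤ b v
  have : Std.Total r := ⟨fun u v => le_total (b u) (b v)⟩
  have : IsTrans (Fin (n + 1)) r := ⟨fun _ _ _ => le_trans⟩
  let l := (List.finRange (n + 1)).insertionSort r
  have hperm : l.Perm (List.finRange (n + 1)) := List.perm_insertionSort _ _
  have hlen : l.length = n + 1 := by simpa using hperm.length_eq
  have hnodup : l.Nodup := hperm.nodup_iff.2 (List.nodup_finRange _)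
  have hmem : ∀ v, v ∈ l := fun v => hperm.mem_iff.2 (List.mem_finRange v)
  have hsorted : l.Pairwise r := List.pairwise_insertionSort _ _
  rw [List.pairwise_iff_getElem] at hsorted
  have hhead : l[0] = 0 := by
    obtain ⟨i, hi, hi0⟩ := List.getElem_of_mem (hmem 0)
    by_contra hne
    have hpos := hb.pos hne
    rcases Nat.eq_zero_or_pos i with rfl | hi'
    · exact hne hi0
    · have := hsorted 0 i (by omega) hi hi'
      simp only [r, hi0, hb.zero] at this
      omega
  refine ⟨l, hlen, hnodup, ?_, ?_⟩
  · rw [List.head?_eq_getElem?, List.getElem?_eq_getElem (by omega), hhead]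
  · intro i hi hi1
    simp only [List.get_eq_getElem]
    have hne : l[i] ≠ 0 := by
      rw [← hhead]
      intro heq
      have := (hnodup.getElem_inj_iff).1 heq
      omega
    have hnot : l[i] ∉ l.take i := by
      intro hin
      obtain ⟨j, hj, hj'⟩ := List.getElem_of_mem hin
      rw [List.getElem_take] at hj'
      have := (hnodup.getElem_inj_iff).1 hj'
      rw [List.length_take] at hj
      omega
    rw [toppleList_apply (hnodup.sublist (List.take_sublist _ _)) hne hnot]
    have hm : F.nbrCount l[i] (fun w => b w < b l[i]) ≤ F.nbrCount l[i] (· ∈ l.take i) := by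
      refine nbrCount_mono fun w _ hw => ?_
      obtain ⟨j, hj, rfl⟩ := List.getElem_of_mem (hmem w)
      have hji : j < i := by
        by_contra hge
        rcases Nat.lt_or_ge i j with hij | hij
        · have := hsorted i j hi hj hij
          simp only [r] at this
          omega
        · obtain rfl : i = j := by omega
          omega
      rw [List.mem_take_iff_getElem]
      exact ⟨j, by omega, rfl⟩
    have hdeg := hb.deg_eq hne
    have hlow := h.lower _ hne
    omega

/-- The set of vertices toppled in the first `k + 1` blocks of the canonical toppling. -/
noncomputable def burn (F : Ferrers n) (c : Fin (n + 1) → ℕ) : ℕ → Set (Fin (n + 1))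
  | 0 => {0}
  | k + 1 => burn F c k ∪ {v | v ≠ 0 ∧ (v ∈ F.rows ↔ (k + 1) % 2 = 0) ∧
      F.deg v ≤ c v + F.nbrCount v (· ∈ burn F c k)}

/-- The fire started at the sink burns the whole graph. -/
def Burnable (F : Ferrers n) (c : Fin (n + 1) → ℕ) : Prop :=
  ∀ D : Set (Fin (n + 1)), 0 ∈ D →
    (∀ v, v ≠ 0 → F.deg v ≤ c v + F.nbrCount v (· ∈ D) → v ∈ D) → ∀ v, v ∈ D

lemma burn_mono (c : Fin (n + 1) → ℕ) : Monotone (F.burn c) :=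
  monotone_nat_of_le_succ fun _ => Set.subset_union_left

lemma Burnable.exists_mem_burn {c : Fin (n + 1) → ℕ} (h : F.Burnable c) (v : Fin (n + 1)) :
    ∃ k, v ∈ F.burn c k := by
  have hK : ∃ K, ∀ u, (∃ k, u ∈ F.burn c k) → u ∈ F.burn c K := by
    have h1 : ∀ u, ∃ k, (∃ k, u ∈ F.burn c k) → u ∈ F.burn c k := fun u => by
      by_cases hu : ∃ k, u ∈ F.burn c k
      · exact ⟨hu.choose, fun _ => hu.choose_spec⟩
      · exact ⟨0, fun h => absurd h hu⟩
    choose f hf using h1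
    exact ⟨Finset.univ.sup f,
      fun u hu => burn_mono c (Finset.le_sup (Finset.mem_univ u)) (hf u hu)⟩
  obtain ⟨K, hK⟩ := hK
  refine ⟨K, h (F.burn c K) (burn_mono c (Nat.zero_le K) rfl) (fun u hu hdeg => ?_) v⟩
  by_cases hp : u ∈ F.rows ↔ (K + 1) % 2 = 0
  · exact hK u ⟨K + 1, Or.inr ⟨hu, hp, hdeg⟩⟩
  · refine hK u ⟨K + 2, Or.inr ⟨hu, ?_, hdeg.trans ?_⟩⟩
    · by_cases hr : u ∈ F.rows
      · simp only [hr, true_iff] at hp ⊢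
        omega
      · simp only [hr, false_iff, not_not] at hp ⊢
        omega
    · exact Nat.add_le_add_left (nbrCount_mono fun w _ hw => burn_mono c (Nat.le_succ K) hw) _

lemma Burnable.exists_fits {c : Fin (n + 1) → ℕ} (h : F.Burnable c) (h0 : c 0 = 0)
    (hst : F.Stable c) : ∃ b, F.Fits b c := by
  have hex := h.exists_mem_burn
  let b : Fin (n + 1) → ℕ := fun v => Nat.find (hex v)
  have hb : ∀ v k, v ∈ F.burn c k ↔ b v ≤ k := fun v k =>
    ⟨fun hv => Nat.find_min' _ hv, fun hv => burn_mono c hv (Nat.find_spec (hex v))⟩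
  have hb0 : b 0 = 0 := Nat.le_zero.1 ((hb 0 0).1 rfl)
  have hstep : ∀ v, v ≠ 0 → 0 < b v ∧ (v ∈ F.rows ↔ b v % 2 = 0) ∧
      F.deg v ≤ c v + F.nbrCount v (fun w => b w < b v) := by
    intro v hv
    have hpos : 0 < b v := by
      by_contra hle
      exact hv ((hb v 0).2 (by omega))
    obtain ⟨m, hm⟩ : ∃ m, b v = m + 1 := ⟨b v - 1, by omega⟩
    rcases (hb v (m + 1)).2 hm.le with hin | ⟨-, hp, hd⟩
    · rw [hb] at hin
      omega
    · refine ⟨hpos, hm ▸ hp, ?_⟩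
      rwa [nbrCount_congr (q := fun w => b w < b v)
        (fun w _ => by rw [hb, hm, Nat.lt_succ_iff])] at hd
  have hpar : ∀ v, v ∈ F.rows ↔ b v % 2 = 0 := by
    intro v
    by_cases hv : v = 0
    · subst hv
      simp [F.zero_mem, hb0]
    · exact (hstep v hv).2.1
  have hadj : ∀ u v, F.Adj u v → b u % 2 ≠ b v % 2 := by
    intro u v huv
    have h1 := huv.mem_rows_iff
    rw [hpar, hpar] at h1
    omega
  have hdeg : ∀ v, F.deg v =
      F.nbrCount v (fun w => b w < b v) + F.nbrCount v (fun w => b v < b w) := fun v =>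
    deg_eq_add fun w hw => by
      have := hadj w v hw
      omega
  have hsplit : ∀ v, F.nbrCount v (fun w => b w < b v) =
      F.nbrCount v (fun w => b w + 2 < b v) + F.layerPred b v := fun v =>
    nbrCount_add (fun w _ => by omega) fun w hw => by
      have := hadj w v hw
      omega
  have hlower : ∀ v, v ≠ 0 → F.layerMin b v ≤ c v := by
    intro v hv
    rw [layerMin, if_neg hv]
    have := hdeg v
    have := (hstep v hv).2.2
    omega
  have hupper : ∀ v, v ≠ 0 → c v < F.layerMin b v + F.layerPred b v := by
    intro v hv
    rw [layerMin, if_neg hv]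
    have h1 := hdeg v
    have h2 := hsplit v
    have h3 : c v + F.nbrCount v (fun w => b w + 2 < b v) < F.deg v := by
      by_cases hsmall : b v ≤ 2
      · have : F.nbrCount v (fun w => b w + 2 < b v) = 0 :=
          Nat.eq_zero_of_not_pos fun hp => by
            obtain ⟨w, -, hw⟩ := nbrCount_pos.1 hp
            omega
        have := hst v hv
        omega
      · obtain ⟨m, hm⟩ : ∃ m, b v = m + 3 := ⟨b v - 3, by omega⟩
        have hnot : v ∉ F.burn c (m + 1) := by
          rw [hb]
          omega
        by_contra hge
        refine hnot (Or.inr ⟨hv, ?_, ?_⟩)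
        · rw [hpar, hm]
          omega
        · rw [nbrCount_congr (q := fun w => b w + 2 < b v) (fun w _ => by rw [hb]; omega)]
          omega
    omega
  refine ⟨b, ⟨hb0, hpar, fun v hv => nbrCount_pos.1 ?_⟩, h0, hlower, hupper⟩
  have := hlower v hv
  have := hupper v hv
  unfold layerPred at this
  omega

lemma Recurrent.burnable {c : Fin (n + 1) → ℕ} (h : F.Recurrent c) : F.Burnable c := by
  obtain ⟨-, -, l, hlen, hnodup, hhead, hl⟩ := h
  intro D h0 hD
  have hall : ∀ i (hi : i < l.length), l[i] ∈ D := by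
    intro i
    induction i using Nat.strong_induction_on with
    | _ i ih =>
      intro hi
      by_cases hne : l[i] = 0
      · rwa [hne]
      have hi1 : 1 ≤ i := by
        by_contra hlt
        obtain rfl : i = 0 := by omega
        rw [List.head?_eq_getElem?, List.getElem?_eq_getElem hi] at hhead
        exact hne (Option.some.inj hhead)
      have hdeg := hl i hi hi1
      simp only [List.get_eq_getElem] at hdeg
      have hnot : l[i] ∉ l.take i := by
        intro hin
        obtain ⟨j, hj, hj'⟩ := List.getElem_of_mem hin
        rw [List.getElem_take] at hj'
        have := (hnodup.getElem_inj_iff).1 hj'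
        rw [List.length_take] at hj
        omega
      rw [toppleList_apply (hnodup.sublist (List.take_sublist _ _)) hne hnot] at hdeg
      refine hD _ hne (hdeg.trans (Nat.add_le_add_left (nbrCount_mono fun w _ hw => ?_) _))
      rw [List.mem_take_iff_getElem] at hw
      obtain ⟨j, hj, rfl⟩ := hw
      exact ih j (by omega) (by omega)
  intro v
  have hv : v ∈ l := by
    have hcard : l.toFinset = Finset.univ := by
      rw [← Finset.card_eq_iff_eq_univ, List.toFinset_card_of_nodup hnodup, hlen,
        Fintype.card_fin]
    rw [← List.mem_toFinset, hcard]
    exact Finset.mem_univ v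
  obtain ⟨i, hi, rfl⟩ := List.getElem_of_mem hv
  exact hall i hi

lemma Recurrent.exists_fits {c : Fin (n + 1) → ℕ} (h : F.Recurrent c) : ∃ b, F.Fits b c :=
  h.burnable.exists_fits h.1 h.2.1

/-- The tableau recording, for every cell, which of its two labels comes first in `b`. -/
noncomputable def layerTab (F : Ferrers n) (b : Fin (n + 1) → ℕ) :
    Fin (n + 1) → Fin (n + 1) → Bool :=
  fun i j => if F.Cell i j ∧ b i < b j then true else false

lemma layerTab_eq_true {b : Fin (n + 1) → ℕ} {i j : Fin (n + 1)} (h : F.Cell i j) :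
    F.layerTab b i j = true ↔ b i < b j := by
  simp [layerTab, h]

lemma IsLayering.layerTab_eq_false {b : Fin (n + 1) → ℕ} (hb : F.IsLayering b)
    {i j : Fin (n + 1)} (h : F.Cell i j) : F.layerTab b i j = false ↔ b j < b i := by
  have := hb.adj_parity (Or.inl h)
  rw [← Bool.not_eq_true, layerTab_eq_true h]
  omega

lemma IsLayering.phiCT_layerMin {b : Fin (n + 1) → ℕ} (hb : F.IsLayering b) :
    F.phiCT (F.layerMin b) = F.layerTab b := by
  unfold phiCT layerTab
  rw [hb.fits_layerMin.bIdx_eq]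

lemma IsLayering.isEW_layerTab {b : Fin (n + 1) → ℕ} (hb : F.IsLayering b) :
    F.IsEW (F.layerTab b) := by
  refine ⟨fun i j h => by simp [layerTab, h], fun j hj => ?_, fun i hi hi0 => ?_, ?_⟩
  · rw [layerTab_eq_true hj, hb.zero]
    exact hb.pos (ne_of_gt hj.2.2)
  · obtain ⟨u, hu, hbu⟩ := hb.pred i hi0
    have hc := (adj_iff_of_mem hi u).1 hu
    exact ⟨u, hc, (hb.layerTab_eq_false hc).2 (by omega)⟩
  · intro i i' j j' h1 h2 h3 h4 e1 e2
    rcases h : F.layerTab b i j with _ | _ <;> rcases h' : F.layerTab b i j' with _ | _ <;>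
      rw [h] at e1 <;> rw [h'] at e2 <;> try rfl
    all_goals
      rw [eq_comm] at e1 e2
      simp only [hb.layerTab_eq_false, layerTab_eq_true, h1, h2, h3, h4] at h h' e1 e2
      omega

lemma IsLayering.phiTC_layerTab {b : Fin (n + 1) → ℕ} (hb : F.IsLayering b) :
    F.phiTC (F.layerTab b) = F.layerMin b := by
  funext v
  unfold phiTC layerMin nbrCount
  split_ifs with h0 hr
  · rfl
  · congr 1
    ext w
    simp only [Set.mem_ofPred_eq, adj_iff_of_mem hr]
    exact and_congr_right layerTab_eq_true
  · congr 1
    ext w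
    simp only [Set.mem_ofPred_eq, adj_iff_of_notMem hr]
    exact and_congr_right hb.layerTab_eq_false

lemma IsLayering.cornersupport_iff {b : Fin (n + 1) → ℕ} (hb : F.IsLayering b)
    {j k : Fin (n + 1)} (h : F.Cell j k) :
    F.Cornersupport (F.layerTab b) j k ↔ b j + 1 ≠ b k ∧ b k + 1 ≠ b j := by
  have hS : ∀ i l, F.suppS (F.layerTab b) i l = true ↔ b i < b l := fun i l => by
    simp [suppS, hb.phiTC_layerTab, hb.fits_layerMin.bIdx_eq]
  have hS' : ∀ i l, F.suppS (F.layerTab b) i l = false ↔ b l ≤ b i := fun i l => by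
    rw [← Bool.not_eq_true, hS, not_lt]
  have hpar := hb.adj_parity (Or.inl h)
  have hk0 : k ≠ 0 := ne_of_gt (lt_of_le_of_lt (Fin.zero_le j) h.2.2)
  unfold Cornersupport
  rcases hT : F.layerTab b j k with _ | _
  · have hlt := (hb.layerTab_eq_false h).1 hT
    simp only [Bool.not_false, hS, hS']
    constructor
    · rintro ⟨j', k', hj', hk', -, -, h1, h2, h3⟩
      rw [hb.parity] at hj' hk'
      have hj := (hb.parity j).1 h.1
      have hk := mt (hb.parity k).2 h.2.1
      omega
    · rintro ⟨-, hne⟩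
      have hj0 : j ≠ 0 := by
        rintro rfl
        rw [hb.zero] at hlt
        omega
      obtain ⟨k', hk', hbk⟩ := hb.pred j hj0
      have hk'0 : k' ≠ 0 := by
        rintro rfl
        rw [hb.zero] at hbk
        omega
      obtain ⟨j', hj', hbj⟩ := hb.pred k' hk'0
      have hk'r := ((adj_iff_of_mem h.1 k').1 hk').2.1
      have hj'r := ((adj_iff_of_notMem hk'r j').1 hj').1
      refine ⟨j', k', hj'r, hk'r, ?_, ?_, by omega, by omega, by omega⟩
      · rintro rfl
        omega
      · rintro rfl
        omega
  · have hlt := (layerTab_eq_true h).1 hT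
    simp only [Bool.not_true, hS, hS']
    constructor
    · rintro ⟨j', k', hj', hk', -, -, h1, h2, h3⟩
      rw [hb.parity] at hj' hk'
      omega
    · rintro ⟨hne, -⟩
      obtain ⟨j', hj', hbj⟩ := hb.pred k hk0
      have hj'0 : j' ≠ 0 := by
        rintro rfl
        rw [hb.zero] at hbj
        omega
      obtain ⟨k', hk', hbk⟩ := hb.pred j' hj'0
      have hj'r := ((adj_iff_of_notMem h.2.1 j').1 hj').1
      have hk'r := ((adj_iff_of_mem hj'r k').1 hk').2.1
      refine ⟨j', k', hj'r, hk'r, ?_, ?_, by omega, by omega, by omega⟩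
      · rintro rfl
        omega
      · rintro rfl
        omega

lemma IsLayering.nu_layerTab {b : Fin (n + 1) → ℕ} (hb : F.IsLayering b) (v : Fin (n + 1)) :
    F.nu (F.layerTab b) v = F.layerPred b v := by
  unfold nu layerPred nbrCount
  split_ifs with hr
  · congr 1
    ext w
    simp only [Set.mem_ofPred_eq, adj_iff_of_mem hr]
    refine and_congr_right fun hc => ?_
    rw [hb.layerTab_eq_false hc, hb.cornersupport_iff hc]
    omega
  · congr 1
    ext w
    simp only [Set.mem_ofPred_eq, adj_iff_of_notMem hr]
    refine and_congr_right fun hc => ?_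
    rw [layerTab_eq_true hc, hb.cornersupport_iff hc]
    omega

/-- `T` orients the edge `{u, v}` from `u` to `v`. -/
def Points (F : Ferrers n) (T : Fin (n + 1) → Fin (n + 1) → Bool) (u v : Fin (n + 1)) : Prop :=
  (F.Cell u v ∧ T u v = true) ∨ (F.Cell v u ∧ T v u = false)

lemma Adj.not_points_iff {T : Fin (n + 1) → Fin (n + 1) → Bool} {u v : Fin (n + 1)}
    (h : F.Adj u v) : ¬F.Points T u v ↔ F.Points T v u := by
  unfold Points
  rcases h with h | h
  · have : ¬F.Cell v u := fun h' => h.2.1 h'.1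
    simp [h, this]
  · have : ¬F.Cell u v := fun h' => h.2.1 h'.1
    simp [h, this]

/-- `φ_TC T` is the outdegree of the orientation given by `T`. -/
lemma phiTC_eq_nbrCount {T : Fin (n + 1) → Fin (n + 1) → Bool} {v : Fin (n + 1)} (hv : v ≠ 0) :
    F.phiTC T v = F.nbrCount v fun w => F.Points T v w := by
  unfold phiTC nbrCount Points
  rw [if_neg hv]
  split_ifs with hr
  · congr 1
    ext w
    have : ¬F.Cell w v := fun h => h.2.1 hr
    simp only [Set.mem_ofPred_eq, adj_iff_of_mem hr]
    tauto
  · congr 1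
    ext w
    have : ¬F.Cell v w := fun h => hr h.1
    simp only [Set.mem_ofPred_eq, adj_iff_of_notMem hr]
    tauto

lemma deg_eq_points_add_phiTC {T : Fin (n + 1) → Fin (n + 1) → Bool} {v : Fin (n + 1)}
    (hv : v ≠ 0) : F.deg v = F.nbrCount v (fun w => F.Points T w v) + F.phiTC T v := by
  rw [phiTC_eq_nbrCount hv]
  exact deg_eq_add fun w hw => hw.not_points_iff.symm

lemma IsEW.exists_points {T : Fin (n + 1) → Fin (n + 1) → Bool} (hT : F.IsEW T)
    {v : Fin (n + 1)} (hv : v ≠ 0) : ∃ w, F.Adj w v ∧ F.Points T w v := by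
  by_cases hr : v ∈ F.rows
  · obtain ⟨j, hj, hj'⟩ := hT.2.2.1 v hr hv
    exact ⟨j, Or.inr hj, Or.inr ⟨hj, hj'⟩⟩
  · have hc : F.Cell 0 v := ⟨F.zero_mem, hr, Fin.pos_of_ne_zero hv⟩
    exact ⟨0, Or.inl hc, Or.inl ⟨hc, hT.2.1 v hc⟩⟩

/-- The orientation given by an EW-tableau is acyclic: no nonempty set of labels is such
that each of them has an in-neighbour in the set. -/
lemma IsEW.rows_eq_empty {T : Fin (n + 1) → Fin (n + 1) → Bool} (hT : F.IsEW T)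
    (C : Set (Fin (n + 1))) (R : Finset (Fin (n + 1)))
    (hC : ∀ j ∈ C, ∃ i ∈ R, F.Cell i j ∧ T i j = true)
    (hR : ∀ i ∈ R, ∃ j ∈ C, F.Cell i j ∧ T i j = false) : R = ∅ := by
  induction hm : R.card generalizing R with
  | zero => exact Finset.card_eq_zero.1 hm
  | succ m ih =>
    have hne : R.Nonempty := Finset.card_pos.1 (by omega)
    let r := R.max' hne
    have hr : r ∈ R := R.max'_mem hne
    obtain ⟨j, hjC, hcell, hj⟩ := hR r hr
    obtain ⟨i, hiR, hcell', hi⟩ := hC j hjC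
    have hir : i ≠ r := by
      rintro rfl
      rw [hj] at hi
      exact absurd hi (by simp)
    have hile : i ≤ r := R.le_max' i hiR
    have hempty : R.erase r = ∅ := by
      refine ih (R.erase r) (fun k hk => ?_) (fun k hk => hR k (Finset.mem_of_mem_erase hk)) ?_
      · obtain ⟨i', hi', hc', ht'⟩ := hC k hk
        by_cases heq : i' = r
        · subst heq
          have hck : F.Cell i k := ⟨hcell'.1, hc'.2.1, lt_of_le_of_lt hile hc'.2.2⟩
          refine ⟨i, Finset.mem_erase.2 ⟨hir, hiR⟩, hck, ?_⟩
          by_contra hf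
          rw [Bool.not_eq_true] at hf
          have := hT.2.2.2 i r j k hcell' hck hcell hc' (hi.trans ht'.symm) (hf.trans hj.symm)
          rw [hi, hf] at this
          exact absurd this (by simp)
        · exact ⟨i', Finset.mem_erase.2 ⟨heq, hi'⟩, hc', ht'⟩
      · rw [Finset.card_erase_of_mem hr]
        omega
    exact absurd (hempty ▸ Finset.mem_erase.2 ⟨hir, hiR⟩) (Finset.notMem_empty i)

lemma IsEW.burnable {T : Fin (n + 1) → Fin (n + 1) → Bool} (hT : F.IsEW T) :
    F.Burnable (F.phiTC T) := by
  intro D h0 hD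
  have hin : ∀ v, v ∉ D → ∃ w, w ∉ D ∧ F.Points T w v := by
    intro v hvD
    have hv : v ≠ 0 := by
      rintro rfl
      exact hvD h0
    by_contra! hno
    refine hvD (hD v hv ?_)
    have h1 := deg_eq_points_add_phiTC (F := F) (T := T) hv
    have h2 : F.nbrCount v (fun w => F.Points T w v) ≤ F.nbrCount v (· ∈ D) :=
      nbrCount_mono fun w _ hw => by
        by_contra hwD
        exact hno w hwD hw
    omega
  have hC : ∀ j ∈ {j | j ∉ F.rows ∧ j ∉ D},
      ∃ i ∈ F.rows.filter (· ∉ D), F.Cell i j ∧ T i j = true := by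
    rintro j ⟨hjr, hjD⟩
    obtain ⟨w, hw, ⟨h1, h2⟩ | ⟨h1, -⟩⟩ := hin j hjD
    · exact ⟨w, Finset.mem_filter.2 ⟨h1.1, hw⟩, h1, h2⟩
    · exact absurd h1.1 hjr
  have hR : ∀ i ∈ F.rows.filter (· ∉ D),
      ∃ j ∈ {j | j ∉ F.rows ∧ j ∉ D}, F.Cell i j ∧ T i j = false := by
    intro i hi
    obtain ⟨hir, hiD⟩ := Finset.mem_filter.1 hi
    obtain ⟨w, hw, ⟨h1, -⟩ | ⟨h1, h2⟩⟩ := hin i hiD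
    · exact absurd hir h1.2.1
    · exact ⟨w, ⟨h1.2.1, hw⟩, h1, h2⟩
  have hempty := hT.rows_eq_empty _ _ hC hR
  intro v
  by_contra hvD
  by_cases hr : v ∈ F.rows
  · exact absurd (hempty ▸ Finset.mem_filter.2 ⟨hr, hvD⟩) (Finset.notMem_empty v)
  · obtain ⟨i, hi, -⟩ := hC v ⟨hr, hvD⟩
    rw [hempty] at hi
    exact Finset.notMem_empty i hi

/-- Every EW-tableau is the tableau of a layering. -/
lemma IsEW.exists_layering {T : Fin (n + 1) → Fin (n + 1) → Bool} (hT : F.IsEW T) :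
    ∃ b, F.IsLayering b ∧ F.layerTab b = T := by
  have hstable : F.Stable (F.phiTC T) := by
    intro v hv
    have h1 := deg_eq_points_add_phiTC (F := F) (T := T) hv
    have h2 := nbrCount_pos.2 (hT.exists_points hv)
    omega
  obtain ⟨b, hfit⟩ := hT.burnable.exists_fits (by simp [phiTC]) hstable
  have hb := hfit.layering
  have hlt : ∀ m v, b v = m → ∀ u, F.Adj u v → F.Points T u v → b u < b v := by
    intro m
    induction m using Nat.strong_induction_on with
    | _ m ih =>
      intro v hm u huv hpt
      by_cases hv : v = 0
      · subst hv
        rcases hpt with ⟨h1, -⟩ | ⟨h1, h2⟩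
        · exact absurd h1.2.2 (by simp)
        · rw [hT.2.1 u h1] at h2
          exact absurd h2 (by simp)
      by_contra hge
      have hsub : F.nbrCount v (fun w => b w < b v) + F.nbrCount v (· = u) ≤
          F.nbrCount v fun w => F.Points T w v := by
        rw [← nbrCount_add (q := (· = u)) (r := fun w => b w < b v ∨ w = u)
          (fun w _ hw hwu => hge (hwu ▸ hw)) fun w _ => Iff.rfl]
        refine nbrCount_mono fun w hw hwv => ?_
        rcases hwv with hwv | rfl
        · by_contra hnp
          have := ih (b w) (hm ▸ hwv) w rfl v hw.symm (hw.not_points_iff.1 hnp)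
          omega
        · exact hpt
      have hpos : 0 < F.nbrCount v (· = u) := nbrCount_pos.2 ⟨u, huv, rfl⟩
      have h1 := deg_eq_points_add_phiTC (F := F) (T := T) hv
      have h2 := hb.deg_eq hv
      have h3 := hfit.lower v hv
      omega
  refine ⟨b, hb, ?_⟩
  funext i j
  by_cases hc : F.Cell i j
  · rcases h : T i j with _ | _
    · rw [hb.layerTab_eq_false hc]
      exact hlt _ i rfl j (Or.inr hc) (Or.inr ⟨hc, h⟩)
    · rw [layerTab_eq_true hc]
      exact hlt _ j rfl i (Or.inl hc) (Or.inl ⟨hc, h⟩)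
  · rw [hT.1 i j hc]
    simp [layerTab, hc]

end Ferrers

/-- The map `ψ : x ↦ (φ_CT (minrec x), x - minrec x)` is a
bijection from the recurrent configurations on `G(F)` onto the decorated
EW-tableaux `(T, a)` with `a_j < ν_j(T)` for every non-sink `j`. -/
theorem psi_bijection {n : ℕ} (F : Ferrers n) :
    Set.BijOn
      (fun c : Fin (n + 1) → ℕ =>
        ((F.phiCT (F.minrecFun c), fun j => c j - F.minrecFun c j) :
          (Fin (n + 1) → Fin (n + 1) → Bool) × (Fin (n + 1) → ℕ)))
      {c | F.Recurrent c}
      {p : (Fin (n + 1) → Fin (n + 1) → Bool) × (Fin (n + 1) → ℕ) |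
        F.IsEW p.1 ∧ p.2 0 = 0 ∧ ∀ j : Fin (n + 1), j ≠ 0 → p.2 j < F.nu p.1 j} := by
  refine ⟨?_, ?_, ?_⟩
  · intro c hc
    obtain ⟨b, hfit⟩ := Ferrers.Recurrent.exists_fits hc
    have hb := hfit.layering
    simp only [Set.mem_ofPred_eq, hfit.minrecFun_eq, hb.phiCT_layerMin, hb.nu_layerTab]
    refine ⟨hb.isEW_layerTab, by rw [hfit.zero, Nat.zero_sub], fun j hj => ?_⟩
    have := hfit.lower j hj
    have := hfit.upper j hj
    omega
  · intro c hc c' hc' heq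
    obtain ⟨b, hfit⟩ := Ferrers.Recurrent.exists_fits hc
    obtain ⟨b', hfit'⟩ := Ferrers.Recurrent.exists_fits hc'
    have hb := hfit.layering
    have hb' := hfit'.layering
    simp only [hfit.minrecFun_eq, hfit'.minrecFun_eq, hb.phiCT_layerMin, hb'.phiCT_layerMin,
      Prod.mk.injEq] at heq
    obtain ⟨h1, h2⟩ := heq
    have hmin : F.layerMin b = F.layerMin b' := by
      rw [← hb.phiTC_layerTab, h1, hb'.phiTC_layerTab]
    funext v
    by_cases hv : v = 0
    · rw [hv, hfit.zero, hfit'.zero]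
    · have h3 := congrFun h2 v
      have h4 := congrFun hmin v
      have := hfit.lower v hv
      have := hfit'.lower v hv
      omega
  · rintro ⟨T, a⟩ ⟨hT, ha0, ha⟩
    obtain ⟨b, hb, rfl⟩ := hT.exists_layering
    simp only [hb.nu_layerTab] at ha0 ha
    have hfit : F.Fits b fun v => F.layerMin b v + a v :=
      ⟨hb, by simp [Ferrers.layerMin, ha0], fun v _ => Nat.le_add_right _ _,
        fun v hv => Nat.add_lt_add_left (ha v hv) _⟩
    refine ⟨fun v => F.layerMin b v + a v, Set.mem_ofPred.2 hfit.recurrent, ?_⟩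
    simp only [hfit.minrecFun_eq, hb.phiCT_layerMin, Nat.add_sub_cancel_left]
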